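/- Let d ≥ 2 be an integer, 0 < t < d/(d−1), and (d−1)t/d ≤ θ < 1. Then the lower θ-intermediate dimension of G_{t,d} satisfies \underline{dim}_θ G_{t,d} ≥ d²θ/(dθ + t). -/

import Mathlib

/-!
Only points of the graph with denominators `q ∈ [Q, 2Q)` are used, where `Q ≈ δ^{-d/(dθ+t)}`, and
covers are excluded by an energy argument. Write `d = n + 1`.

There are about `Q^d` such points, up to logarithms (`card_layers_ge`, from `φ(q) ≥ q/(1 + log₂ q)`).
If `U₁, …, U_M` covers them with diameters in `[δ^{1/θ}, δ]` and `∑ |U_i|^s ≤ 1`, then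
Cauchy–Schwarz gives (`energy_bound`)
`N² ≤ N δ^{-s/θ} + δ^{d-s} ∑_{x ≠ y} |x - y|^{-d}`.
The quantity `|x - y|^{-d}` is bounded by the product of the inverse coordinate differences
(`rpow_le_pairW`). For fixed denominators `m, k` the resulting sum factorises into one-dimensional
sums of `|a/m - b/k|^{-1}`, and these are `O(mk log Q)` because an integer multiple of `gcd(m, k)`
is represented as `ak - bm` at most `gcd(m, k)` times (`sum_wt_le`); this is the Duffin–Schaeffer
overlap estimate. The height difference contributes `Q^{t+1}/|m - k|`, so the energy is at most
`Q^{t+2d}` up to logarithms (`sum_pairW_le`).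

With the above `Q`, the conditions `δ^{-s/θ} ≪ Q^d` and `δ^{d-s} Q^t ≪ 1` both amount to
`s < d²θ/(dθ+t)`, and the gap in `s` absorbs the logarithms, so that no such cover exists
(`no_cheap_cover`). As `lowerIntDim` is an infimum of reals, some admissible exponent must also be
exhibited (`exists_crude_cover`).
-/

open Set MeasureTheory Filter

noncomputable section

/-- Minimal number of closed axis-parallel cubes of side length `δ` needed to cover `S`. -/
def cubeCoverNum (n : ℕ) (δ : ℝ) (S : Set (EuclideanSpace ℝ (Fin n))) : ℕ :=
  sInf {m : ℕ | ∃ c : Fin m → (Fin n → ℝ),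
    S ⊆ ⋃ i, {z : EuclideanSpace ℝ (Fin n) | ∀ j, z j ∈ Set.Icc (c i j) (c i j + δ)}}

-- The popcorn pyramid function `f_{t,d}` on `[0,1]^{d-1}`.
open Classical in
def popcornFun (t : ℝ) (d : ℕ) (x : Fin (d-1) → ℝ) : ℝ :=
  if h : ∃ q : ℕ, ∃ p : Fin (d-1) → ℕ,
      (∀ i, 1 ≤ p i ∧ p i < q ∧ Nat.Coprime (p i) q) ∧ (∀ i, x i = (p i : ℝ) / (q : ℝ))
  then (h.choose : ℝ) ^ (-t)
  else 0

/-- The graph `G_{t,d}` of the popcorn pyramid function, as a subset of `ℝ^d`. -/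
def Gset (t : ℝ) (d : ℕ) : Set (EuclideanSpace ℝ (Fin d)) :=
  {z | ∃ x : Fin (d-1) → ℝ, (∀ i, x i ∈ Set.Icc (0:ℝ) 1) ∧
    (∀ i : Fin (d-1), z (Fin.castLE (Nat.sub_le d 1) i) = x i) ∧
    (∀ j : Fin d, (j : ℕ) = d - 1 → z j = popcornFun t d x)}

/-- The set `F_{t,d} ⊆ ℝ^d`. -/
def Fset (t : ℝ) (d : ℕ) : Set (EuclideanSpace ℝ (Fin d)) :=
  {z | ∃ q : ℕ, ∃ p : Fin (d-1) → ℕ, (∀ i, 1 ≤ p i ∧ p i < q) ∧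
      (∀ i : Fin (d-1), z (Fin.castLE (Nat.sub_le d 1) i) = (p i : ℝ) / (q : ℝ)) ∧
      (∀ j : Fin d, (j : ℕ) = d - 1 → z j = (q : ℝ) ^ (-t))} ∪
  {z | (∀ i : Fin (d-1), z (Fin.castLE (Nat.sub_le d 1) i) ∈ Set.Icc (0:ℝ) 1) ∧
    (∀ j : Fin d, (j : ℕ) = d - 1 → z j = 0)}

/-- Upper box dimension, via covering numbers by closed cubes. -/
def upperBoxDim (n : ℕ) (S : Set (EuclideanSpace ℝ (Fin n))) : ℝ :=
  limsup (fun δ : ℝ => Real.log (cubeCoverNum n δ S) / (-Real.log δ)) (nhdsWithin 0 (Set.Ioi 0))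

/-- Lower box dimension, via covering numbers by closed cubes. -/
def lowerBoxDim (n : ℕ) (S : Set (EuclideanSpace ℝ (Fin n))) : ℝ :=
  liminf (fun δ : ℝ => Real.log (cubeCoverNum n δ S) / (-Real.log δ)) (nhdsWithin 0 (Set.Ioi 0))

/-- Assouad dimension. -/
def assouadDim (n : ℕ) (S : Set (EuclideanSpace ℝ (Fin n))) : ℝ :=
  sInf {α : ℝ | ∃ C : ℝ, 0 < C ∧ ∀ x ∈ S, ∀ r R : ℝ, 0 < r → r < R →
    (cubeCoverNum n r (Metric.closedBall x R ∩ S) : ℝ) ≤ C * (R / r) ^ α}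

/-- Upper θ-intermediate dimension (with the convention that `θ = 0` gives Hausdorff dimension).
Covers are finite, which is no loss of generality since all covering sets have diameter
bounded below by `δ^(1/θ) > 0`. -/
def upperIntDim (n : ℕ) (θ : ℝ) (S : Set (EuclideanSpace ℝ (Fin n))) : ℝ :=
  if θ = 0 then (dimH S).toReal else
  sInf {s : ℝ | 0 ≤ s ∧ ∀ ε : ℝ, 0 < ε → ∃ δ₀ : ℝ, 0 < δ₀ ∧ δ₀ ≤ 1 ∧
    ∀ δ : ℝ, 0 < δ → δ < δ₀ →
    ∃ (m : ℕ) (U : Fin m → Set (EuclideanSpace ℝ (Fin n))),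
      S ⊆ (⋃ i, U i) ∧ (∀ i, δ ^ (1/θ) ≤ Metric.diam (U i) ∧ Metric.diam (U i) ≤ δ) ∧
      (∑ i, Metric.diam (U i) ^ s) ≤ ε}

/-- Lower θ-intermediate dimension (with the convention that `θ = 0` gives Hausdorff dimension). -/
def lowerIntDim (n : ℕ) (θ : ℝ) (S : Set (EuclideanSpace ℝ (Fin n))) : ℝ :=
  if θ = 0 then (dimH S).toReal else
  sInf {s : ℝ | 0 ≤ s ∧ ∀ ε : ℝ, 0 < ε → ∀ δ₀ : ℝ, 0 < δ₀ → δ₀ ≤ 1 →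
    ∃ δ : ℝ, 0 < δ ∧ δ < δ₀ ∧
    ∃ (m : ℕ) (U : Fin m → Set (EuclideanSpace ℝ (Fin n))),
      S ⊆ (⋃ i, U i) ∧ (∀ i, δ ^ (1/θ) ≤ Metric.diam (U i) ∧ Metric.diam (U i) ≤ δ) ∧
      (∑ i, Metric.diam (U i) ^ s) ≤ ε}

/-- `l_t(k,δ) = ⌊(1/(kδ))^(1/t)⌋`. -/
def lfun (t δ : ℝ) (k : ℕ) : ℕ := Nat.floor ((1/((k:ℝ)*δ)) ^ (1/t))

/-- The Duffin–Schaeffer sets `E^{(d-1)}(δ,n) ⊆ ℝ^{d-1}`. -/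
def Eset (d : ℕ) (δ : ℝ) (n : ℕ) : Set (EuclideanSpace ℝ (Fin (d-1))) :=
  {z | ∃ m : Fin (d-1) → ℕ, (∀ i, 1 ≤ m i ∧ m i < n ∧ Nat.Coprime (m i) n) ∧
    ∀ i, z i ∈ Set.Ioo ((m i : ℝ)/(n:ℝ) - δ) ((m i : ℝ)/(n:ℝ) + δ)}

/-- The horizontal-layer input sets `L_{t,d}(δ,k) ⊆ [0,1]^{d-1}`. -/
def Lset (t : ℝ) (d : ℕ) (δ : ℝ) (k : ℕ) : Set (EuclideanSpace ℝ (Fin (d-1))) :=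
  {z | ∃ n : ℕ, lfun t δ (k+1) < n ∧ n ≤ lfun t δ k ∧
    ∃ m : Fin (d-1) → ℕ, (∀ i, 1 ≤ m i ∧ m i < n ∧ Nat.Coprime (m i) n) ∧
    ∀ i, z i = (m i : ℝ)/(n:ℝ)}

end

/-! ### Truncated reciprocals and their sums -/

/-- The truncated reciprocal `1 / max(1, |k|)` of an integer; the truncation makes `kern 0 = 1`. -/
noncomputable def kern (k : ℤ) : ℝ := (max 1 |(k : ℝ)|)⁻¹

/-- The sum of `kern` over `|k| ≤ K`, of order `log K`. -/
noncomputable def kernSum (K : ℕ) : ℝ := ∑ k ∈ Finset.Icc (-(K : ℤ)) K, kern k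

/-- The truncated inverse distance of the fractions `a/m` and `b/n`. As `gcd m n` divides
`a n - b m`, this is exactly `|a/m - b/n|⁻¹` for distinct fractions, and `mn / gcd m n` for equal
ones (so `m` when `m = n`). -/
noncomputable def wt (m n a b : ℕ) : ℝ :=
  (m * n : ℝ) / max (Nat.gcd m n : ℝ) |(a : ℝ) * n - b * m|

lemma kern_nonneg (k : ℤ) : 0 ≤ kern k := by unfold kern; positivity

lemma kernSum_eq (K : ℕ) : kernSum K = 1 + 2 * (harmonic K : ℝ) := by
  induction K with
  | zero => simp [kernSum, kern]
  | succ K ih =>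
    have h : Finset.Icc (-((K + 1 : ℕ) : ℤ)) ((K + 1 : ℕ) : ℤ)
        = insert (-((K + 1 : ℕ) : ℤ)) (insert ((K + 1 : ℕ) : ℤ) (Finset.Icc (-(K : ℤ)) K)) := by
      ext k; simp only [Finset.mem_Icc, Finset.mem_insert]; push_cast; omega
    unfold kernSum at ih ⊢
    rw [h, Finset.sum_insert, Finset.sum_insert, ih, harmonic_succ]
    · have h1 : max (1 : ℝ) |(K : ℝ) + 1| = K + 1 := by
        rw [abs_of_nonneg (by positivity)]; exact max_eq_right (by linarith [(Nat.cast_nonneg K : (0:ℝ) ≤ K)])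
      have h2 : |-1 + -(K : ℝ)| = |(K : ℝ) + 1| := by rw [← abs_neg]; congr 1; ring
      simp only [kern]; push_cast
      rw [abs_neg, h1]; ring
    · simp
    · simp only [Finset.mem_insert, Finset.mem_Icc]; push_cast; omega

lemma kernSum_le {K : ℕ} : kernSum K ≤ 3 + 2 * Real.log K := by
  rw [kernSum_eq]; have := harmonic_le_one_add_log K; linarith

/-! ### Overlap estimate for fractions with two given denominators -/

/-- The Duffin–Schaeffer overlap count in summed form. With `g = gcd m n`, `m = m' g`, `n = n' g`,
each integer `k` has at most `g` representations `k = a n' - b m'` with `0 ≤ a < m`, so the sum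
loses only the logarithmic factor `kernSum K` against `m n`. -/
lemma sum_wt_le {m n K : ℕ} (hm : 0 < m) (hn : 0 < n) (hK : m * n ≤ K) :
    ∑ a ∈ Finset.range m, ∑ b ∈ Finset.range n, wt m n a b ≤ m * n * kernSum K := by
  obtain ⟨m', n', hc, hm', hn'⟩ := Nat.exists_coprime m n
  set g := Nat.gcd m n with hg
  have hg0 : 0 < g := Nat.gcd_pos_of_pos_left _ hm
  have hgR : (0 : ℝ) < g := by exact_mod_cast hg0
  have hm'0 : 0 < m' := by
    rcases Nat.eq_zero_or_pos m' with h | h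
    · simp [h] at hm'; omega
    · exact h
  have hn'0 : 0 < n' := by
    rcases Nat.eq_zero_or_pos n' with h | h
    · simp [h] at hn'; omega
    · exact h
  -- the second entry determines `a` modulo `m'`, the first entry then `a` itself, and hence `b`
  let e : ℕ × ℕ → ℕ × ℤ := fun x => (x.1 / m', (x.1 : ℤ) * n' - x.2 * m')
  have hw : ∀ x : ℕ × ℕ, wt m n x.1 x.2 = g * m' * n' * kern (e x).2 := by
    intro x
    have h1 : (x.1 : ℝ) * n - x.2 * m = g * ((x.1 : ℝ) * n' - x.2 * m') := by
      have hmR : (m : ℝ) = m' * g := by exact_mod_cast hm'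
      have hnR : (n : ℝ) = n' * g := by exact_mod_cast hn'
      rw [hmR, hnR]; ring
    have hmR : (m : ℝ) = m' * g := by exact_mod_cast hm'
    have hnR : (n : ℝ) = n' * g := by exact_mod_cast hn'
    simp only [wt, kern, e]
    rw [h1, abs_mul, abs_of_pos hgR, ← hg]
    push_cast
    have h2 : max (g : ℝ) (g * |(x.1 : ℝ) * n' - x.2 * m'|) = g * max 1 |(x.1 : ℝ) * n' - x.2 * m'| := by
      rw [mul_max_of_nonneg _ _ hgR.le, mul_one]
    have h3 : (0:ℝ) < max 1 |(x.1 : ℝ) * n' - x.2 * m'| := by positivity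
    rw [h2, hmR, hnR]
    field_simp
  have hinj : Set.InjOn e (Finset.range m ×ˢ Finset.range n : Finset (ℕ × ℕ)) := by
    rintro ⟨a, b⟩ _ ⟨a', b'⟩ _ h
    simp only [e, Prod.mk.injEq] at h
    obtain ⟨h1, h2⟩ := h
    have h3 : (m' : ℤ) ∣ ((a : ℤ) - a') * n' := ⟨(b : ℤ) - b', by linarith⟩
    have h4 : (m' : ℤ) ∣ (a : ℤ) - a' :=
      IsCoprime.dvd_of_dvd_mul_right (Nat.isCoprime_iff_coprime.mpr hc) h3
    have h5 : a ≡ a' [MOD m'] := by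
      rw [Nat.modEq_iff_dvd]
      have := (dvd_neg.mpr h4); simpa using this
    have h6 : a = a' := by
      rw [← Nat.div_add_mod a m', ← Nat.div_add_mod a' m', h1, h5]
    subst h6
    have h7 : (b : ℤ) * m' = b' * m' := by linarith
    have h8 : (b : ℤ) = b' := by
      have : (m' : ℤ) ≠ 0 := by exact_mod_cast hm'0.ne'
      exact mul_right_cancel₀ this h7
    simp only [Prod.mk.injEq, true_and]; exact_mod_cast h8
  have hsub : (Finset.range m ×ˢ Finset.range n).image e
      ⊆ Finset.range g ×ˢ Finset.Icc (-(K : ℤ)) K := by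
    intro y hy
    simp only [Finset.mem_image, Finset.mem_product, Finset.mem_range] at hy
    obtain ⟨⟨a, b⟩, ⟨ha, hb⟩, rfl⟩ := hy
    simp only at ha hb
    have h1 : a * n' ≤ K := by
      calc a * n' ≤ m * n := by
            apply Nat.mul_le_mul ha.le; rw [hn']; exact Nat.le_mul_of_pos_right _ hg0
        _ ≤ K := hK
    have h2 : b * m' ≤ K := by
      calc b * m' ≤ n * m := by
            apply Nat.mul_le_mul hb.le; rw [hm']; exact Nat.le_mul_of_pos_right _ hg0
        _ ≤ K := by rw [mul_comm]; exact hK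
    have h1' : (a : ℤ) * n' ≤ K := by exact_mod_cast h1
    have h2' : (b : ℤ) * m' ≤ K := by exact_mod_cast h2
    have h3 : (0 : ℤ) ≤ (a : ℤ) * n' := by positivity
    have h4 : (0 : ℤ) ≤ (b : ℤ) * m' := by positivity
    simp only [e, Finset.mem_product, Finset.mem_range, Finset.mem_Icc]
    refine ⟨?_, by linarith, by linarith⟩
    rw [Nat.div_lt_iff_lt_mul hm'0, mul_comm, ← hm']; exact ha
  rw [← Finset.sum_product (f := fun x : ℕ × ℕ => wt m n x.1 x.2)]
  calc ∑ x ∈ Finset.range m ×ˢ Finset.range n, wt m n x.1 x.2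
      = ∑ x ∈ Finset.range m ×ˢ Finset.range n, g * m' * n' * kern (e x).2 :=
        Finset.sum_congr rfl fun x _ => hw x
    _ = ∑ y ∈ (Finset.range m ×ˢ Finset.range n).image e, g * m' * n' * kern y.2 := by
        rw [Finset.sum_image hinj]
    _ ≤ ∑ y ∈ Finset.range g ×ˢ Finset.Icc (-(K : ℤ)) K, g * m' * n' * kern y.2 :=
        Finset.sum_le_sum_of_subset_of_nonneg hsub fun y _ _ =>
          mul_nonneg (by positivity) (kern_nonneg _)
    _ = m * n * kernSum K := by
        have hmR : (m : ℝ) = m' * g := by exact_mod_cast hm'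
        have hnR : (n : ℝ) = n' * g := by exact_mod_cast hn'
        rw [Finset.sum_product]
        simp only [Finset.sum_const, Finset.card_range, ← Finset.mul_sum, nsmul_eq_mul]
        rw [hmR, hnR, kernSum]; ring

/-! ### The energy inequality -/

/-- Any cover of a finite point set by sets with diameters in `[η, δ]` and `∑ diam ^ s ≤ 1` forces
an energy inequality. Each point is assigned to one set of the cover and Cauchy–Schwarz is applied
to the fibre sizes; pairs `x = y` contribute at most `η ^ (-s)`, and pairs of distinct points in a
common set contribute `diam ^ (-s) ≤ δ ^ (D - s) diam ^ (-D)`. -/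
lemma energy_bound {α E : Type*} [DecidableEq α] [PseudoMetricSpace E] (P : Finset α) (X : α → E)
    {M : ℕ} (U : Fin M → Set E) (hcov : ∀ x ∈ P, ∃ i, X x ∈ U i) {s η δ D : ℝ}
    (hη : 0 < η) (hs : 0 ≤ s) (hsD : s ≤ D)
    (hU : ∀ i, η ≤ Metric.diam (U i) ∧ Metric.diam (U i) ≤ δ)
    (hsum : ∑ i, Metric.diam (U i) ^ s ≤ 1) (W : α → α → ℝ) (hW0 : ∀ x y, 0 ≤ W x y)
    (hW : ∀ i, ∀ x ∈ P, ∀ y ∈ P, x ≠ y → X x ∈ U i → X y ∈ U i →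
      Metric.diam (U i) ^ (-D) ≤ W x y) :
    (P.card : ℝ) ^ 2 ≤ P.card * η ^ (-s) + δ ^ (D - s) * ∑ x ∈ P, ∑ y ∈ P, W x y := by
  classical
  rcases P.eq_empty_or_nonempty with rfl | ⟨x₀, hx₀⟩
  · simp
  obtain ⟨i₀, -⟩ := hcov x₀ hx₀
  have hδ0 : 0 < δ := hη.trans_le ((hU i₀).1.trans (hU i₀).2)
  have hcov' : ∀ x, ∃ i, x ∈ P → X x ∈ U i := fun x => by
    by_cases hx : x ∈ P
    · obtain ⟨i, hi⟩ := hcov x hx; exact ⟨i, fun _ => hi⟩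
    · exact ⟨i₀, fun h => absurd h hx⟩
  choose f hf using hcov'
  set r : Fin M → ℝ := fun i => Metric.diam (U i) with hr
  have hr0 : ∀ i, 0 < r i := fun i => hη.trans_le (hU i).1
  let c : Fin M → ℝ := fun i => ∑ x ∈ P, if f x = i then 1 else 0
  have hc : (P.card : ℝ) = ∑ i, c i := by
    simp only [c]
    rw [Finset.sum_comm]; simp
  have hCS : (∑ i, c i) ^ 2 ≤ (∑ i, r i ^ s) * ∑ i, c i ^ 2 * r i ^ (-s) := by
    apply Finset.sum_sq_le_sum_mul_sum_of_sq_le_mul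
    · intro i _; exact (Real.rpow_pos_of_pos (hr0 i) _).le
    · intro i _; exact mul_nonneg (sq_nonneg _) (Real.rpow_pos_of_pos (hr0 i) _).le
    · intro i _
      have : r i ^ s * r i ^ (-s) = 1 := by
        rw [← Real.rpow_add (hr0 i)]; simp
      apply le_of_eq; linear_combination (- c i ^ 2) * this
  have hE : ∑ i, c i ^ 2 * r i ^ (-s)
      = ∑ x ∈ P, ∑ y ∈ P, if f y = f x then r (f x) ^ (-s) else 0 := by
    have : ∀ i, c i ^ 2 * r i ^ (-s)
        = ∑ x ∈ P, ∑ y ∈ P, if f x = i then (if f y = i then r i ^ (-s) else 0) else 0 := by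
      intro i
      rw [sq, Finset.sum_mul_sum, Finset.sum_mul]
      refine Finset.sum_congr rfl fun x _ => ?_
      rw [Finset.sum_mul]
      refine Finset.sum_congr rfl fun y _ => ?_
      split_ifs <;> simp
    simp only [this]
    rw [Finset.sum_comm]
    refine Finset.sum_congr rfl fun x _ => ?_
    rw [Finset.sum_comm]
    refine Finset.sum_congr rfl fun y _ => ?_
    simp
  have hpt : ∀ x ∈ P, ∀ y ∈ P, (if f y = f x then r (f x) ^ (-s) else 0)
      ≤ (if x = y then η ^ (-s) else 0) + δ ^ (D - s) * W x y := by
    intro x hx y hy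
    have hpos : 0 ≤ δ ^ (D - s) * W x y := mul_nonneg (Real.rpow_nonneg hδ0.le _) (hW0 x y)
    have hpos2 : 0 ≤ η ^ (-s) := Real.rpow_nonneg hη.le _
    by_cases hxy : x = y
    · subst hxy
      simp only [if_true]
      have : r (f x) ^ (-s) ≤ η ^ (-s) :=
        Real.rpow_le_rpow_of_nonpos hη (hU _).1 (by linarith)
      linarith
    · simp only [hxy, if_false, zero_add]
      split_ifs with h
      · have h1 := hW (f x) x hx y hy hxy (hf x hx) (h ▸ hf y hy)
        have h2 : r (f x) ^ (-s) = r (f x) ^ (D - s) * r (f x) ^ (-D) := by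
          rw [← Real.rpow_add (hr0 _)]; congr 1; ring
        rw [h2]
        exact mul_le_mul (Real.rpow_le_rpow (hr0 _).le (hU _).2 (by linarith)) h1
          (Real.rpow_nonneg (hr0 _).le _) (Real.rpow_nonneg hδ0.le _)
      · exact hpos
  have hEn : 0 ≤ ∑ i, c i ^ 2 * r i ^ (-s) :=
    Finset.sum_nonneg fun i _ => mul_nonneg (sq_nonneg _) (Real.rpow_nonneg (hr0 i).le _)
  calc (P.card : ℝ) ^ 2 ≤ (∑ i, r i ^ s) * ∑ i, c i ^ 2 * r i ^ (-s) := by rw [hc]; exact hCS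
    _ ≤ 1 * ∑ i, c i ^ 2 * r i ^ (-s) := mul_le_mul_of_nonneg_right hsum hEn
    _ = ∑ x ∈ P, ∑ y ∈ P, if f y = f x then r (f x) ^ (-s) else 0 := by rw [one_mul, hE]
    _ ≤ ∑ x ∈ P, ∑ y ∈ P, ((if x = y then η ^ (-s) else 0) + δ ^ (D - s) * W x y) :=
        Finset.sum_le_sum fun x hx => Finset.sum_le_sum fun y hy => hpt x hx y hy
    _ = P.card * η ^ (-s) + δ ^ (D - s) * ∑ x ∈ P, ∑ y ∈ P, W x y := by
        simp only [Finset.sum_add_distrib, Finset.mul_sum]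
        congr 1
        rw [Finset.sum_congr rfl fun x hx => Finset.sum_ite_eq P x (fun _ => η ^ (-s))]
        rw [Finset.sum_congr rfl fun x hx => if_pos hx]
        simp

/-! ### Lower bound for Euler's totient -/

/-- The `i`-th smallest element of `S` is at least `i + 1`, so the product is bounded below by the
telescoping product of `1 - 1/(i+1)`. -/
lemma prod_one_sub_inv_ge (S : Finset ℕ) (hS : ∀ p ∈ S, 2 ≤ p) :
    1 / ((S.card : ℝ) + 1) ≤ ∏ p ∈ S, (1 - (p : ℝ)⁻¹) := by
  induction S using Finset.induction_on_max with
  | empty => simp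
  | insert a S hmax ih =>
    have ha : a ∉ S := fun h => (hmax a h).ne rfl
    have ih' := ih fun p hp => hS p (Finset.mem_insert_of_mem hp)
    have hcard : S.card + 2 ≤ a := by
      have hsub : S ⊆ Finset.Ico 2 a := fun p hp =>
        Finset.mem_Ico.mpr ⟨hS p (Finset.mem_insert_of_mem hp), hmax p hp⟩
      have := Finset.card_le_card hsub
      have h2 := hS a (Finset.mem_insert_self _ _)
      rw [Nat.card_Ico] at this; omega
    rw [Finset.prod_insert ha, Finset.card_insert_of_notMem ha]
    have hc : (0:ℝ) ≤ S.card := Nat.cast_nonneg _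
    have h1 : ((S.card : ℝ) + 1) / (S.card + 2) ≤ 1 - (a : ℝ)⁻¹ := by
      have h3 : (a : ℝ)⁻¹ ≤ ((S.card : ℝ) + 2)⁻¹ :=
        inv_anti₀ (by positivity) (by exact_mod_cast hcard)
      have : ((S.card : ℝ) + 1) / (S.card + 2) = 1 - ((S.card : ℝ) + 2)⁻¹ := by
        field_simp; ring
      linarith
    calc 1 / (((S.card + 1 : ℕ) : ℝ) + 1)
        = ((S.card : ℝ) + 1) / (S.card + 2) * (1 / ((S.card : ℝ) + 1)) := by
          push_cast; field_simp; ring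
      _ ≤ _ := mul_le_mul h1 ih' (by positivity) (le_trans (by positivity) h1)

lemma totient_ge (q : ℕ) (hq : 0 < q) :
    (q : ℝ) / (Nat.log 2 q + 1) ≤ (Nat.totient q : ℝ) := by
  have h := Nat.totient_eq_mul_prod_factors q
  have h' : (Nat.totient q : ℝ) = q * ∏ p ∈ q.primeFactors, (1 - (p : ℝ)⁻¹) := by
    have h2 := congrArg ((↑) : ℚ → ℝ) h
    push_cast at h2; exact h2
  have hcard : q.primeFactors.card ≤ Nat.log 2 q := by
    apply Nat.le_log_of_pow_le (by norm_num)
    calc 2 ^ q.primeFactors.card = ∏ p ∈ q.primeFactors, 2 := by simp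
      _ ≤ ∏ p ∈ q.primeFactors, p :=
        Finset.prod_le_prod' fun p hp => (Nat.prime_of_mem_primeFactors hp).two_le
      _ ≤ q := Nat.le_of_dvd hq (Nat.prod_primeFactors_dvd q)
  rw [h', div_eq_mul_one_div]
  apply mul_le_mul_of_nonneg_left _ (Nat.cast_nonneg _)
  refine le_trans ?_ (prod_one_sub_inv_ge _ fun p hp => (Nat.prime_of_mem_primeFactors hp).two_le)
  apply one_div_le_one_div_of_le (by positivity)
  have : (q.primeFactors.card : ℝ) ≤ Nat.log 2 q := by exact_mod_cast hcard
  linarith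

/-! ### The points of the graph with denominators in `[Q, 2Q)` -/

/-- The residues `0 ≤ a < q` coprime to `q`; for `q ≥ 2` these are the numerators of the reduced
fractions in `(0, 1)` with denominator `q`. -/
def redNum (q : ℕ) : Finset ℕ := (Finset.range q).filter (Nat.Coprime q)

/-- Pairs `⟨q, p⟩` of a denominator `q ∈ [Q, 2Q)` and an `n`-tuple `p` of numerators, each
coprime to `q`. -/
def layers (n Q : ℕ) : Finset (Σ _ : ℕ, (Fin n → ℕ)) :=
  (Finset.Ico Q (2 * Q)).sigma fun q => Fintype.piFinset fun _ => redNum q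

/-- The point `(p₁/q, …, pₙ/q, q^{-t})` of `ℝ^{n+1}`. -/
noncomputable def gpt (t : ℝ) (n : ℕ) (x : Σ _ : ℕ, (Fin n → ℕ)) :
    EuclideanSpace ℝ (Fin (n + 1)) :=
  WithLp.toLp 2 (Fin.snoc (α := fun _ => ℝ) (fun i => (x.2 i : ℝ) / x.1) ((x.1 : ℝ) ^ (-t)))

/-- An upper bound for `|x - y|^{-(n+1)}`, `x ≠ y`, in product form: one factor for the height and
one for each horizontal coordinate. -/
noncomputable def pairW (t : ℝ) (n Q : ℕ) (x y : Σ _ : ℕ, (Fin n → ℕ)) : ℝ :=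
  (2 * Q : ℝ) ^ (t + 1) * (1 + 1 / t) * kern ((x.1 : ℤ) - y.1) *
    ∏ j, wt x.1 y.1 (x.2 j) (y.2 j)

lemma mem_redNum {q a : ℕ} : a ∈ redNum q ↔ a < q ∧ Nat.Coprime a q := by
  simp [redNum, Nat.coprime_comm]

lemma mem_layers {n Q : ℕ} {x : Σ _ : ℕ, (Fin n → ℕ)} :
    x ∈ layers n Q ↔ (Q ≤ x.1 ∧ x.1 < 2 * Q) ∧ ∀ j, x.2 j < x.1 ∧ Nat.Coprime (x.2 j) x.1 := by
  simp [layers, Fintype.mem_piFinset, mem_redNum]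

lemma wt_nonneg (m n a b : ℕ) : 0 ≤ wt m n a b := by
  unfold wt
  exact div_nonneg (by positivity) (le_trans (abs_nonneg _) (le_max_right _ _))

lemma pairW_nonneg {t : ℝ} (ht : 0 < t) (n Q : ℕ) (x y : Σ _ : ℕ, (Fin n → ℕ)) :
    0 ≤ pairW t n Q x y := by
  unfold pairW
  refine mul_nonneg (mul_nonneg (by positivity) (kern_nonneg _)) ?_
  exact Finset.prod_nonneg fun j _ => wt_nonneg _ _ _ _

lemma eq_of_coprime_cross {m n a b : ℕ} (ha : Nat.Coprime a m) (hb : Nat.Coprime b n)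
    (h : a * n = b * m) : m = n := by
  apply Nat.dvd_antisymm
  · exact (Nat.Coprime.symm ha).dvd_of_dvd_mul_left ⟨b, by rw [h, mul_comm]⟩
  · exact (Nat.Coprime.symm hb).dvd_of_dvd_mul_left ⟨a, by rw [← h, mul_comm]⟩

/-- The denominator of a reduced fraction is unique, so the choice in `popcornFun` is immaterial. -/
lemma popcornFun_eq (t : ℝ) {n q : ℕ} (hn : 1 ≤ n) (p : Fin n → ℕ)
    (hp : ∀ i, 1 ≤ p i ∧ p i < q ∧ Nat.Coprime (p i) q) :
    popcornFun t (n + 1) (fun i => (p i : ℝ) / q) = (q : ℝ) ^ (-t) := by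
  have h : ∃ q' : ℕ, ∃ p' : Fin (n + 1 - 1) → ℕ,
      (∀ i, 1 ≤ p' i ∧ p' i < q' ∧ Nat.Coprime (p' i) q') ∧
      (∀ i : Fin (n + 1 - 1), (p i : ℝ) / (q : ℝ) = (p' i : ℝ) / (q' : ℝ)) := ⟨q, p, hp, fun _ => rfl⟩
  unfold popcornFun
  rw [dif_pos h]
  obtain ⟨p', hp', he⟩ := h.choose_spec
  have i₀ : Fin n := ⟨0, hn⟩
  have h1 := hp i₀
  have h2 := hp' i₀
  have h3 := he i₀
  have hq : (q : ℝ) ≠ 0 := by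
    have : q ≠ 0 := by omega
    exact_mod_cast this
  have hq' : (h.choose : ℝ) ≠ 0 := by
    have : h.choose ≠ 0 := by omega
    exact_mod_cast this
  rw [div_eq_div_iff hq hq'] at h3
  have h4 : p i₀ * h.choose = p' i₀ * q := by exact_mod_cast h3
  rw [← eq_of_coprime_cross h1.2.2 h2.2.2 h4]

lemma gpt_castLE (t : ℝ) (n : ℕ) (x : Σ _ : ℕ, (Fin n → ℕ)) (i : Fin n)
    (h : n ≤ n + 1) : gpt t n x (Fin.castLE h i) = (x.2 i : ℝ) / x.1 := by
  have : Fin.castLE h i = Fin.castSucc i := rfl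
  rw [this]; simp [gpt]

lemma gpt_last (t : ℝ) (n : ℕ) (x : Σ _ : ℕ, (Fin n → ℕ)) :
    gpt t n x (Fin.last n) = (x.1 : ℝ) ^ (-t) := by
  simp [gpt]

lemma gpt_mem (t : ℝ) {n Q : ℕ} (hn : 1 ≤ n) (hQ : 2 ≤ Q) {x : Σ _ : ℕ, (Fin n → ℕ)}
    (hx : x ∈ layers n Q) : gpt t n x ∈ Gset t (n + 1) := by
  rw [mem_layers] at hx
  have hq : 2 ≤ x.1 := hQ.trans hx.1.1
  refine ⟨fun i => (x.2 i : ℝ) / x.1, ?_, fun i => gpt_castLE t n x i _, ?_⟩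
  · intro i
    have h1 : (x.2 i : ℝ) < x.1 := by exact_mod_cast (hx.2 i).1
    exact ⟨by positivity, div_le_one_of_le₀ h1.le (by positivity)⟩
  · intro j hj
    have : j = Fin.last n := Fin.ext (by simpa using hj)
    rw [this, gpt_last, popcornFun_eq t hn]
    intro i
    refine ⟨?_, hx.2 i⟩
    rcases Nat.eq_zero_or_pos (x.2 i) with h | h
    · have := (hx.2 i).2
      rw [h, Nat.coprime_zero_left] at this; omega
    · exact h

/-! ### Distances between the points -/

/-- Vertical separation of layers: `m^{-t} - n^{-t}` is at least of order `(n - m) Q^{-t-1}`. -/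
lemma height_gap {t : ℝ} (ht : 0 < t) {m n Q : ℕ} (hm : 0 < m) (hmn : m < n) (hn : n ≤ 2 * Q) :
    t * (2 * Q : ℝ) ^ (-t - 1) * ((n : ℝ) - m) ≤ (m : ℝ) ^ (-t) - (n : ℝ) ^ (-t) := by
  have hmR : (0 : ℝ) < m := by exact_mod_cast hm
  have hmnR : (m : ℝ) < n := by exact_mod_cast hmn
  have hnR : (0 : ℝ) < n := hmR.trans hmnR
  have hnQ : (n : ℝ) ≤ 2 * Q := by exact_mod_cast hn
  have h1 : 1 - (m : ℝ) / n ≤ Real.log (n / m) := by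
    have := Real.one_sub_inv_le_log_of_pos (div_pos hnR hmR)
    rwa [inv_div] at this
  have h2 : 1 + t * (1 - (m : ℝ) / n) ≤ ((n : ℝ) / m) ^ t := by
    rw [Real.rpow_def_of_pos (div_pos hnR hmR)]
    have := Real.add_one_le_exp (Real.log (n / m) * t)
    nlinarith
  have h3 : (m : ℝ) ^ (-t) = (n : ℝ) ^ (-t) * ((n : ℝ) / m) ^ t := by
    rw [Real.div_rpow hnR.le hmR.le, Real.rpow_neg hmR.le, Real.rpow_neg hnR.le]
    have := (Real.rpow_pos_of_pos hnR t).ne'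
    field_simp
  have h4 : (n : ℝ) ^ (-t) = (n : ℝ) ^ (-t - 1) * n := by
    rw [← Real.rpow_add_one hnR.ne']; congr 1; ring
  have h5 : (2 * Q : ℝ) ^ (-t - 1) ≤ (n : ℝ) ^ (-t - 1) :=
    Real.rpow_le_rpow_of_nonpos hnR hnQ (by linarith)
  have hp : 0 < (n : ℝ) ^ (-t) := Real.rpow_pos_of_pos hnR _
  calc t * (2 * Q : ℝ) ^ (-t - 1) * ((n : ℝ) - m)
      ≤ t * (n : ℝ) ^ (-t - 1) * ((n : ℝ) - m) := by
        apply mul_le_mul_of_nonneg_right _ (by linarith)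
        exact mul_le_mul_of_nonneg_left h5 ht.le
    _ = (n : ℝ) ^ (-t) * (t * (1 - (m : ℝ) / n)) := by
        rw [h4]; field_simp
    _ ≤ (n : ℝ) ^ (-t) * (((n : ℝ) / m) ^ t - 1) :=
        mul_le_mul_of_nonneg_left (by linarith) hp.le
    _ = _ := by rw [h3]; ring

lemma inv_le_wt_of_ne {m n a b : ℕ} (hm : 0 < m) (hn : 0 < n) {r : ℝ} (hr : 0 < r)
    (hd : |(a : ℝ) / m - b / n| ≤ r) (hne : a * n ≠ b * m) : r⁻¹ ≤ wt m n a b := by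
  have hmR : (0 : ℝ) < m := by exact_mod_cast hm
  have hnR : (0 : ℝ) < n := by exact_mod_cast hn
  have hneZ : (a : ℤ) * n - b * m ≠ 0 := by
    rw [sub_ne_zero]; exact_mod_cast hne
  have hdvd : (Nat.gcd m n : ℤ) ∣ (a : ℤ) * n - b * m :=
    dvd_sub (Dvd.dvd.mul_left (by exact_mod_cast Nat.gcd_dvd_right m n) _)
      (Dvd.dvd.mul_left (by exact_mod_cast Nat.gcd_dvd_left m n) _)
  have hle : (Nat.gcd m n : ℤ) ≤ |(a : ℤ) * n - b * m| :=
    Int.le_of_dvd (abs_pos.mpr hneZ) ((dvd_abs _ _).mpr hdvd)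
  have hleR : (Nat.gcd m n : ℝ) ≤ |(a : ℝ) * n - b * m| := by exact_mod_cast hle
  have hpos : (0 : ℝ) < |(a : ℝ) * n - b * m| :=
    lt_of_lt_of_le (by exact_mod_cast Nat.gcd_pos_of_pos_left _ hm) hleR
  unfold wt
  rw [max_eq_right hleR, le_div_iff₀ hpos, inv_mul_le_iff₀ hr]
  have : (a : ℝ) / m - b / n = ((a : ℝ) * n - b * m) / (m * n) := by field_simp
  rw [this, abs_div, abs_of_pos (mul_pos hmR hnR), div_le_iff₀ (mul_pos hmR hnR)] at hd
  exact hd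

/-- Any `r` dominating the distance of two distinct points dominates each coordinate difference; if
the denominators agree, some horizontal coordinate differs, whence `r ≥ 1/m`, which covers the
factors of `pairW` whose coordinate difference vanishes. -/
lemma rpow_le_pairW {t : ℝ} (ht : 0 < t) {n Q : ℕ} (hQ : 1 ≤ Q) {x y : Σ _ : ℕ, (Fin n → ℕ)}
    (hx : x ∈ layers n Q) (hy : y ∈ layers n Q) (hxy : x ≠ y) {r : ℝ} (hr : 0 < r)
    (hd : dist (gpt t n x) (gpt t n y) ≤ r) :
    r ^ (-((n + 1 : ℕ) : ℝ)) ≤ pairW t n Q x y := by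
  rw [mem_layers] at hx hy
  have hh : ∀ j : Fin n, |(x.2 j : ℝ) / x.1 - y.2 j / y.1| ≤ r := by
    intro j
    have := (PiLp.dist_apply_le (gpt t n x) (gpt t n y) (Fin.castLE (Nat.le_succ n) j)).trans hd
    rwa [gpt_castLE, gpt_castLE, Real.dist_eq] at this
  have hv : |(x.1 : ℝ) ^ (-t) - (y.1 : ℝ) ^ (-t)| ≤ r := by
    have := (PiLp.dist_apply_le (gpt t n x) (gpt t n y) (Fin.last n)).trans hd
    rwa [gpt_last, gpt_last, Real.dist_eq] at this
  obtain ⟨m, a⟩ := x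
  obtain ⟨k, b⟩ := y
  simp only at hx hy hh hv
  have hm : 0 < m := by omega
  have hk : 0 < k := by omega
  have hQR : (1 : ℝ) ≤ Q := by exact_mod_cast hQ
  have hpow : 0 < (2 * Q : ℝ) ^ (t + 1) := by positivity
  have hsame : m = k → r⁻¹ ≤ m := by
    rintro rfl
    have hab : ∃ j, a j ≠ b j := by
      by_contra hcon
      push Not at hcon
      exact hxy (by rw [funext hcon])
    obtain ⟨j, hj⟩ := hab
    have h1 := inv_le_wt_of_ne hm hm hr (hh j) (fun h => hj (Nat.eq_of_mul_eq_mul_right hm h))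
    refine h1.trans ?_
    have hmR : (0 : ℝ) < m := by exact_mod_cast hm
    unfold wt
    rw [Nat.gcd_self]
    rw [div_le_iff₀ (lt_of_lt_of_le hmR (le_max_left _ _))]
    exact mul_le_mul_of_nonneg_left (le_max_left _ _) hmR.le
  have hcoord : ∀ j, r⁻¹ ≤ wt m k (a j) (b j) := by
    intro j
    by_cases hc : a j * k = b j * m
    · have hmk := eq_of_coprime_cross (hx.2 j).2 (hy.2 j).2 hc
      refine (hsame hmk).trans ?_
      subst hmk
      have hmR : (0 : ℝ) < m := by exact_mod_cast hm
      have hcR : (a j : ℝ) * m = b j * m := by exact_mod_cast hc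
      unfold wt
      rw [Nat.gcd_self, hcR, sub_self, abs_zero, max_eq_left hmR.le, mul_div_assoc, div_self hmR.ne',
        mul_one]
    · exact inv_le_wt_of_ne hm hk hr (hh j) hc
  -- for equal denominators `r⁻¹ ≤ m < 2Q ≤ (2Q)^{t+1}`; otherwise the layers are separated
  have hvert : r⁻¹ ≤ (2 * Q : ℝ) ^ (t + 1) * (1 + 1 / t) * kern ((m : ℤ) - k) := by
    rcases eq_or_ne m k with hmk | hmk
    · refine (hsame hmk).trans ?_
      subst hmk
      have hm2 : (m : ℝ) ≤ 2 * Q := by exact_mod_cast hx.1.2.le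
      have h1 : (2 * Q : ℝ) ≤ (2 * Q : ℝ) ^ (t + 1) :=
        Real.self_le_rpow_of_one_le (by linarith) (by linarith)
      have h2 : kern ((m : ℤ) - m) = 1 := by simp [kern]
      rw [h2, mul_one]
      have : 0 < 1 / t := by positivity
      nlinarith
    · have hgap : t * (2 * Q : ℝ) ^ (-t - 1) * |(m : ℝ) - k| ≤ r := by
        refine le_trans ?_ hv
        rcases lt_or_gt_of_ne hmk with h | h
        · have h1 := height_gap ht hm h hy.1.2.le
          have hR : (m : ℝ) < k := by exact_mod_cast h
          rw [abs_sub_comm, abs_of_pos (sub_pos.mpr hR)]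
          exact h1.trans (le_abs_self _)
        · have h1 := height_gap ht hk h hx.1.2.le
          have hR : (k : ℝ) < m := by exact_mod_cast h
          rw [abs_of_pos (sub_pos.mpr hR), abs_sub_comm]
          exact h1.trans (le_abs_self _)
      have h1Z : (1 : ℤ) ≤ |(m : ℤ) - k| := by
        apply Int.one_le_abs; rw [sub_ne_zero]; exact_mod_cast hmk
      have h1 : (1 : ℝ) ≤ |(m : ℝ) - k| := by exact_mod_cast h1Z
      have h2 : kern ((m : ℤ) - k) = |(m : ℝ) - k|⁻¹ := by
        unfold kern; push_cast; rw [max_eq_right h1]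
      have h3 : (2 * Q : ℝ) ^ (-t - 1) = ((2 * Q : ℝ) ^ (t + 1))⁻¹ := by
        rw [← Real.rpow_neg (by positivity)]; congr 1; ring
      have h0 : (0 : ℝ) < |(m : ℝ) - k| := by linarith
      have h4 : r⁻¹ ≤ (t * (2 * Q : ℝ) ^ (-t - 1) * |(m : ℝ) - k|)⁻¹ := by
        apply inv_anti₀ _ hgap
        rw [h3]; positivity
      refine h4.trans ?_
      rw [h2, h3, mul_inv, mul_inv, inv_inv]
      apply mul_le_mul_of_nonneg_right _ (by positivity)
      have : t⁻¹ ≤ 1 + 1 / t := by rw [one_div]; linarith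
      rw [mul_comm]
      exact mul_le_mul_of_nonneg_left this hpow.le
  have hri : 0 ≤ r⁻¹ := (inv_pos.mpr hr).le
  calc r ^ (-((n + 1 : ℕ) : ℝ)) = r⁻¹ * ∏ _j : Fin n, r⁻¹ := by
        rw [Real.rpow_neg hr.le, Real.rpow_natCast, ← inv_pow, pow_succ']; simp
    _ ≤ _ := by
        unfold pairW
        exact mul_le_mul hvert (Finset.prod_le_prod (fun _ _ => hri) fun j _ => hcoord j)
          (Finset.prod_nonneg fun _ _ => hri) (hri.trans hvert)

/-! ### Energy and cardinality of the point set -/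

lemma sum_kern_le {m Q : ℕ} (hm : Q ≤ m ∧ m < 2 * Q) :
    ∑ k ∈ Finset.Ico Q (2 * Q), kern ((m : ℤ) - k) ≤ kernSum (4 * Q ^ 2) := by
  have hinj : Set.InjOn (fun k : ℕ => (m : ℤ) - k) (Finset.Ico Q (2 * Q)) := by
    intro a _ b _ h; simp only at h; omega
  rw [← Finset.sum_image (f := kern) hinj]
  apply Finset.sum_le_sum_of_subset_of_nonneg _ fun _ _ _ => kern_nonneg _
  intro k hk
  simp only [Finset.mem_image, Finset.mem_Ico] at hk
  obtain ⟨a, ha, rfl⟩ := hk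
  have : Q ≤ 4 * Q ^ 2 := by nlinarith
  rw [Finset.mem_Icc]; omega

lemma kernSum_nonneg (K : ℕ) : 0 ≤ kernSum K := Finset.sum_nonneg fun _ _ => kern_nonneg _

/-- Total energy: the sum factorises over coordinates for each pair of denominators, giving
`Q^{t + 2(n+1)}` up to logarithms. -/
lemma sum_pairW_le {t : ℝ} (ht : 0 < t) {n Q : ℕ} (hQ : 1 ≤ Q) :
    ∑ x ∈ layers n Q, ∑ y ∈ layers n Q, pairW t n Q x y
      ≤ (2 * Q : ℝ) ^ (t + 1) * (1 + 1 / t) * Q * kernSum (4 * Q ^ 2) *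
        (4 * Q ^ 2 * kernSum (4 * Q ^ 2)) ^ n := by
  set A : ℝ := (2 * Q : ℝ) ^ (t + 1) * (1 + 1 / t) with hA
  have hA0 : 0 ≤ A := by positivity
  set S := kernSum (4 * Q ^ 2) with hS
  have hS0 : 0 ≤ S := kernSum_nonneg _
  set B : ℝ := (4 * Q ^ 2 * S) ^ n with hB
  have hB0 : 0 ≤ B := by positivity
  have hfix : ∀ m ∈ Finset.Ico Q (2 * Q), ∀ k ∈ Finset.Ico Q (2 * Q),
      ∑ a ∈ Fintype.piFinset (fun _ : Fin n => redNum m),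
        ∑ b ∈ Fintype.piFinset (fun _ : Fin n => redNum k), ∏ j, wt m k (a j) (b j) ≤ B := by
    intro m hm k hk
    rw [Finset.mem_Ico] at hm hk
    have h1 : ∑ a ∈ Fintype.piFinset (fun _ : Fin n => redNum m),
        ∑ b ∈ Fintype.piFinset (fun _ : Fin n => redNum k), ∏ j, wt m k (a j) (b j)
        = (∑ a ∈ redNum m, ∑ b ∈ redNum k, wt m k a b) ^ n := by
      have h2 : ∀ a : Fin n → ℕ, ∑ b ∈ Fintype.piFinset (fun _ : Fin n => redNum k),
          ∏ j, wt m k (a j) (b j) = ∏ j, ∑ b ∈ redNum k, wt m k (a j) b := fun a =>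
        (Finset.prod_univ_sum (fun _ => redNum k) (fun j b => wt m k (a j) b)).symm
      simp only [h2]
      rw [← Finset.prod_univ_sum (fun _ : Fin n => redNum m)
        (fun _ a => ∑ b ∈ redNum k, wt m k a b)]
      simp
    rw [h1, hB]
    have h0 : ∀ a, 0 ≤ ∑ b ∈ redNum k, wt m k a b := fun a =>
      Finset.sum_nonneg fun b _ => wt_nonneg _ _ _ _
    apply pow_le_pow_left₀ (Finset.sum_nonneg fun a _ => h0 a)
    have hmk : m * k ≤ 4 * Q ^ 2 := by nlinarith
    calc ∑ a ∈ redNum m, ∑ b ∈ redNum k, wt m k a b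
        ≤ ∑ a ∈ redNum m, ∑ b ∈ Finset.range k, wt m k a b :=
          Finset.sum_le_sum fun a _ => Finset.sum_le_sum_of_subset_of_nonneg
            (Finset.filter_subset _ _) fun _ _ _ => wt_nonneg _ _ _ _
      _ ≤ ∑ a ∈ Finset.range m, ∑ b ∈ Finset.range k, wt m k a b :=
          Finset.sum_le_sum_of_subset_of_nonneg (Finset.filter_subset _ _)
            fun _ _ _ => Finset.sum_nonneg fun _ _ => wt_nonneg _ _ _ _
      _ ≤ m * k * S := sum_wt_le (by omega) (by omega) hmk
      _ ≤ 4 * Q ^ 2 * S := by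
          apply mul_le_mul_of_nonneg_right _ hS0; exact_mod_cast hmk
  calc ∑ x ∈ layers n Q, ∑ y ∈ layers n Q, pairW t n Q x y
      = ∑ m ∈ Finset.Ico Q (2 * Q), ∑ k ∈ Finset.Ico Q (2 * Q),
          A * kern ((m : ℤ) - k) * ∑ a ∈ Fintype.piFinset (fun _ : Fin n => redNum m),
            ∑ b ∈ Fintype.piFinset (fun _ : Fin n => redNum k), ∏ j, wt m k (a j) (b j) := by
        simp only [layers, Finset.sum_sigma, pairW, Finset.mul_sum, ← hA]
        refine Finset.sum_congr rfl fun m _ => ?_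
        rw [Finset.sum_comm]
    _ ≤ ∑ m ∈ Finset.Ico Q (2 * Q), ∑ k ∈ Finset.Ico Q (2 * Q), A * kern ((m : ℤ) - k) * B :=
        Finset.sum_le_sum fun m hm => Finset.sum_le_sum fun k hk =>
          mul_le_mul_of_nonneg_left (hfix m hm k hk) (mul_nonneg hA0 (kern_nonneg _))
    _ = ∑ m ∈ Finset.Ico Q (2 * Q), A * (∑ k ∈ Finset.Ico Q (2 * Q), kern ((m : ℤ) - k)) * B := by
        simp only [Finset.mul_sum, Finset.sum_mul]
    _ ≤ ∑ m ∈ Finset.Ico Q (2 * Q), A * S * B :=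
        Finset.sum_le_sum fun m hm => mul_le_mul_of_nonneg_right
          (mul_le_mul_of_nonneg_left (sum_kern_le (Finset.mem_Ico.mp hm)) hA0) hB0
    _ = A * Q * S * B := by
        rw [Finset.sum_const, Nat.card_Ico, nsmul_eq_mul, show 2 * Q - Q = Q by omega]; ring

/-- There are at least `Q^{n+1}` points, up to logarithms. -/
lemma card_layers_ge (n : ℕ) {Q : ℕ} (hQ : 1 ≤ Q) :
    (Q : ℝ) * ((Q : ℝ) / (Nat.log 2 (2 * Q) + 1)) ^ n ≤ ((layers n Q).card : ℝ) := by
  have h1 : (layers n Q).card = ∑ q ∈ Finset.Ico Q (2 * Q), Nat.totient q ^ n := by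
    simp only [layers, Finset.card_sigma, Fintype.card_piFinset_const]
    rfl
  rw [h1]; push_cast
  calc (Q : ℝ) * ((Q : ℝ) / (Nat.log 2 (2 * Q) + 1)) ^ n
      = ∑ q ∈ Finset.Ico Q (2 * Q), ((Q : ℝ) / (Nat.log 2 (2 * Q) + 1)) ^ n := by
        rw [Finset.sum_const, Nat.card_Ico, nsmul_eq_mul, show 2 * Q - Q = Q by omega]
    _ ≤ _ := by
        apply Finset.sum_le_sum
        intro q hq
        rw [Finset.mem_Ico] at hq
        apply pow_le_pow_left₀ (by positivity)
        refine le_trans ?_ (totient_ge q (by omega))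
        have h2 : (Nat.log 2 q : ℝ) ≤ Nat.log 2 (2 * Q) := by
          exact_mod_cast Nat.log_mono_right hq.2.le
        have h3 : (Q : ℝ) ≤ q := by exact_mod_cast hq.1
        gcongr

lemma exists_log_bound {τ : ℝ} (hτ : 0 < τ) : ∃ C : ℝ, 1 ≤ C ∧ ∀ Q : ℕ, 1 ≤ Q →
    kernSum (4 * Q ^ 2) ≤ C * (Q : ℝ) ^ τ ∧ (Nat.log 2 (2 * Q) + 1 : ℝ) ≤ C * (Q : ℝ) ^ τ := by
  have hl2 : 0 < Real.log 2 := Real.log_pos (by norm_num)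
  have hl4 : 0 < Real.log 4 := Real.log_pos (by norm_num)
  refine ⟨(3 + 2 * Real.log 4 + 4 / τ) + (2 + 1 / (τ * Real.log 2)), ?_, ?_⟩
  · have : 0 < 4 / τ := by positivity
    have : 0 < 1 / (τ * Real.log 2) := by positivity
    linarith
  intro Q hQ
  have hQR : (1 : ℝ) ≤ Q := by exact_mod_cast hQ
  have hQ0 : (0 : ℝ) < Q := by linarith
  have hp : 1 ≤ (Q : ℝ) ^ τ := Real.one_le_rpow hQR hτ.le
  have hlog : Real.log Q ≤ (Q : ℝ) ^ τ / τ := Real.log_le_rpow_div hQ0.le hτ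
  have e1 : 0 < 4 / τ := by positivity
  have e2 : 0 < 1 / (τ * Real.log 2) := by positivity
  constructor
  · refine kernSum_le.trans ?_
    push_cast
    rw [Real.log_mul (by norm_num) (by positivity), Real.log_pow]
    push_cast
    have : 4 * Real.log Q ≤ 4 / τ * (Q : ℝ) ^ τ := by
      calc 4 * Real.log Q ≤ 4 * ((Q : ℝ) ^ τ / τ) := by linarith
        _ = _ := by ring
    nlinarith
  · have h1 : (Nat.log 2 (2 * Q) : ℝ) ≤ Real.logb 2 (2 * Q) := by
      have := Real.natLog_le_logb (2 * Q) 2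
      push_cast at this; exact this
    have h2 : Real.logb 2 (2 * Q) = 1 + Real.log Q / Real.log 2 := by
      rw [Real.logb, Real.log_mul (by norm_num) hQ0.ne']; field_simp
    have h3 : Real.log Q / Real.log 2 ≤ 1 / (τ * Real.log 2) * (Q : ℝ) ^ τ := by
      calc Real.log Q / Real.log 2 ≤ ((Q : ℝ) ^ τ / τ) / Real.log 2 := by gcongr
        _ = _ := by field_simp
    nlinarith

lemma exists_small {C e : ℝ} (hC : 1 ≤ C) (he : 0 < e) :
    ∃ δ₀ : ℝ, 0 < δ₀ ∧ δ₀ ≤ 1 ∧ ∀ δ, 0 < δ → δ < δ₀ → C * δ ^ e ≤ 1 := by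
  have hC0 : 0 < C := by linarith
  refine ⟨C ^ (-(1 / e)), Real.rpow_pos_of_pos hC0 _,
    Real.rpow_le_one_of_one_le_of_nonpos hC (by simp [he.le]), fun δ h0 h1 => ?_⟩
  have h2 : δ ^ e ≤ (C ^ (-(1 / e))) ^ e := Real.rpow_le_rpow h0.le h1.le he.le
  have h3 : (C ^ (-(1 / e))) ^ e = C⁻¹ := by
    rw [← Real.rpow_mul hC0.le, ← Real.rpow_neg_one]; congr 1; field_simp
  rw [h3] at h2
  calc C * δ ^ e ≤ C * C⁻¹ := mul_le_mul_of_nonneg_left h2 hC0.le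
    _ = 1 := mul_inv_cancel₀ hC0.ne'

/-- The cardinality and energy bounds with all logarithms absorbed into powers `Q^τ`. -/
lemma exists_poly_bounds {t : ℝ} (ht : 0 < t) (n : ℕ) {τ : ℝ} (hτ : 0 < τ) :
    ∃ C : ℝ, 1 ≤ C ∧ ∀ Q : ℕ, 1 ≤ Q →
      (Q : ℝ) ^ ((n : ℝ) + 1 - n * τ) ≤ C * (layers n Q).card ∧
      ∑ x ∈ layers n Q, ∑ y ∈ layers n Q, pairW t n Q x y
        ≤ C * (Q : ℝ) ^ (t + 2 * (n + 1) + (n + 1) * τ) := by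
  obtain ⟨C, hC, hb⟩ := exists_log_bound hτ
  have hC0 : 0 < C := by linarith
  have h2 : (0 : ℝ) < 2 ^ (t + 1) * (1 + 1 / t) * C * (4 * C) ^ n := by positivity
  refine ⟨C ^ n + 2 ^ (t + 1) * (1 + 1 / t) * C * (4 * C) ^ n, ?_, ?_⟩
  · have := one_le_pow₀ hC (n := n); linarith
  intro Q hQ
  obtain ⟨hS, hL⟩ := hb Q hQ
  have hQR : (1 : ℝ) ≤ Q := by exact_mod_cast hQ
  have hQ0 : (0 : ℝ) < Q := by linarith
  constructor
  · have h1 := card_layers_ge n hQ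
    have h3 : (Q : ℝ) * ((Q : ℝ) / (C * (Q : ℝ) ^ τ)) ^ n
        ≤ (Q : ℝ) * ((Q : ℝ) / (Nat.log 2 (2 * Q) + 1)) ^ n := by
      gcongr
    have h4 : (Q : ℝ) ^ ((n : ℝ) + 1 - n * τ)
        = C ^ n * ((Q : ℝ) * ((Q : ℝ) / (C * (Q : ℝ) ^ τ)) ^ n) := by
      have h5 : (Q : ℝ) ^ ((n : ℝ) + 1 - n * τ)
          = (Q : ℝ) ^ (n : ℝ) * Q / ((Q : ℝ) ^ τ) ^ n := by
        rw [Real.rpow_sub hQ0, Real.rpow_add_one hQ0.ne', mul_comm (n : ℝ) τ,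
          Real.rpow_mul_natCast hQ0.le]
      rw [h5, Real.rpow_natCast, div_pow, mul_pow]
      field_simp
    rw [h4]
    calc _ ≤ C ^ n * ((layers n Q).card : ℝ) :=
          mul_le_mul_of_nonneg_left (h3.trans h1) (by positivity)
      _ ≤ _ := mul_le_mul_of_nonneg_right (by linarith) (Nat.cast_nonneg _)
  · refine (sum_pairW_le ht hQ).trans ?_
    have hS0 := kernSum_nonneg (4 * Q ^ 2)
    calc (2 * Q : ℝ) ^ (t + 1) * (1 + 1 / t) * Q * kernSum (4 * Q ^ 2) *
          (4 * Q ^ 2 * kernSum (4 * Q ^ 2)) ^ n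
        ≤ (2 * Q : ℝ) ^ (t + 1) * (1 + 1 / t) * Q * (C * (Q : ℝ) ^ τ) *
          (4 * Q ^ 2 * (C * (Q : ℝ) ^ τ)) ^ n := by gcongr
      _ = 2 ^ (t + 1) * (1 + 1 / t) * C * (4 * C) ^ n *
          (Q : ℝ) ^ (t + 2 * (n + 1) + (n + 1) * τ) := by
        have h5 : (Q : ℝ) ^ (t + 2 * (n + 1) + (n + 1) * τ)
            = (Q : ℝ) ^ (t + 1) * Q * (Q : ℝ) ^ τ * ((Q : ℝ) ^ 2 * (Q : ℝ) ^ τ) ^ n := by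
          have h6 : ((Q : ℝ) ^ 2 * (Q : ℝ) ^ τ) ^ n = (Q : ℝ) ^ ((2 + τ) * n) := by
            rw [Real.rpow_mul_natCast hQ0.le, Real.rpow_add hQ0]; norm_num
          rw [h6, ← Real.rpow_add_one hQ0.ne', ← Real.rpow_add hQ0, ← Real.rpow_add hQ0]
          congr 1; ring
        rw [h5, Real.mul_rpow (by norm_num) hQ0.le]
        simp only [mul_pow]
        ring
      _ ≤ _ := by
        apply mul_le_mul_of_nonneg_right _ (by positivity)
        have := pow_pos hC0 n; linarith

/-! ### Absence of cheap covers -/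

/-- For `s` below the claimed bound, no admissible cover at a small scale `δ` has `∑ diam ^ s ≤ 1`.
-/
lemma no_cheap_cover {n : ℕ} (hn : 1 ≤ n) {t θ s : ℝ} (ht : 0 < t) (hθ0 : 0 < θ) (hθ1 : θ < 1)
    (hs0 : 0 ≤ s) (hs : s < ((n : ℝ) + 1) ^ 2 * θ / (((n : ℝ) + 1) * θ + t)) :
    ∃ δ₀ : ℝ, 0 < δ₀ ∧ δ₀ ≤ 1 ∧ ∀ δ : ℝ, 0 < δ → δ < δ₀ →
      ∀ (M : ℕ) (U : Fin M → Set (EuclideanSpace ℝ (Fin (n + 1)))),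
        Gset t (n + 1) ⊆ ⋃ i, U i →
        (∀ i, δ ^ (1 / θ) ≤ Metric.diam (U i) ∧ Metric.diam (U i) ≤ δ) →
        ¬ ∑ i, Metric.diam (U i) ^ s ≤ 1 := by
  set D : ℝ := (n : ℝ) + 1 with hD
  have hnR : (1 : ℝ) ≤ n := by exact_mod_cast hn
  have hD0 : 0 < D := by positivity
  have hden : 0 < D * θ + t := by positivity
  set β : ℝ := D / (D * θ + t) with hβ
  have hβ0 : 0 < β := by positivity
  -- both terms of the energy inequality balance exactly at `s = D β θ`
  have hs₀ : D ^ 2 * θ / (D * θ + t) = D * β * θ := by rw [hβ]; field_simp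
  have hbal : D - β * t = D * β * θ := by rw [hβ]; field_simp; ring
  rw [hs₀] at hs
  set σ : ℝ := D * β * θ - s with hσ
  have hσ0 : 0 < σ := by linarith
  set τ : ℝ := σ / (4 * D * β) with hτ
  have hτ0 : 0 < τ := by positivity
  have hτσ : D * β * τ = σ / 4 := by rw [hτ]; field_simp
  have hnτ : β * (n * τ) ≤ σ / 4 := by
    have : β * (n * τ) + β * τ = σ / 4 := by rw [← hτσ, hD]; ring
    have : 0 < β * τ := by positivity
    linarith
  obtain ⟨C, hC, hb⟩ := exists_poly_bounds ht n hτ0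
  have hC0 : 0 < C := by linarith
  set E : ℝ := t + D * τ + 2 * (n * τ) with hE
  have hE0 : 0 < E := by positivity
  have h2E : (1 : ℝ) ≤ 2 ^ E := Real.one_le_rpow (by norm_num) hE0.le
  have hbig : 1 ≤ 4 * C ^ 3 * 2 ^ E := by
    have h3 : 1 ≤ C ^ 3 := one_le_pow₀ hC
    exact one_le_mul_of_one_le_of_one_le (by linarith only [h3]) h2E
  obtain ⟨δ₀, hδ₀, hδ₀1, hsmall⟩ := exists_small hbig (show 0 < σ / 4 by positivity)
  refine ⟨δ₀, hδ₀, hδ₀1, fun δ hδ hδlt M U hcov hU hsum => ?_⟩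
  have hδ1 : δ < 1 := hδlt.trans_le hδ₀1
  have hsm := hsmall δ hδ hδlt
  -- the value of `Q` for which both terms of the energy inequality become critical at `σ = 0`
  set Y : ℝ := δ ^ (-β) with hY
  have hY1 : 1 < Y := Real.one_lt_rpow_of_pos_of_lt_one_of_neg hδ hδ1 (by linarith)
  set Q : ℕ := ⌈Y⌉₊ with hQ
  have hQY : Y ≤ Q := Nat.le_ceil _
  have hQ2Y : (Q : ℝ) ≤ 2 * Y := by
    have := Nat.ceil_lt_add_one (show 0 ≤ Y by linarith); linarith
  have hQ2 : 2 ≤ Q := by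
    have : (1 : ℝ) < Q := by linarith
    exact_mod_cast this
  have hQ0 : (0 : ℝ) < Q := by linarith
  obtain ⟨hN, hT⟩ := hb Q (by omega)
  set N : ℝ := ((layers n Q).card : ℝ) with hNdef
  set T : ℝ := ∑ x ∈ layers n Q, ∑ y ∈ layers n Q, pairW t n Q x y with hTdef
  have hη : 0 < δ ^ (1 / θ) := Real.rpow_pos_of_pos hδ _
  have hsD : s ≤ D := by
    have : 0 < β * t := by positivity
    linarith
  have key := energy_bound (layers n Q) (gpt t n) U
    (fun x hx => by simpa using hcov (gpt_mem t hn hQ2 hx)) (D := ((n + 1 : ℕ) : ℝ))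
    hη hs0 (by push_cast; exact hsD) hU hsum (pairW t n Q) (pairW_nonneg ht n Q)
    (fun i x hx y hy hxy hxi hyi => by
      have hr : 0 < Metric.diam (U i) := hη.trans_le (hU i).1
      have hbd : Bornology.IsBounded (U i) := by
        by_contra h
        exact hr.ne' (Metric.diam_eq_zero_of_unbounded h)
      exact rpow_le_pairW ht (by omega) hx hy hxy hr (Metric.dist_le_diam_of_mem hbd hxi hyi))
  rw [← hNdef, ← hTdef] at key
  push_cast at key
  rw [← hD] at key
  have hN0 : 0 < N := by
    have : 0 < (Q : ℝ) ^ ((n : ℝ) + 1 - n * τ) := Real.rpow_pos_of_pos hQ0 _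
    exact pos_of_mul_pos_right (this.trans_le hN) hC0.le
  have hexp : ∀ e : ℝ, σ / 4 ≤ e → δ ^ e ≤ δ ^ (σ / 4) := fun e he =>
    Real.rpow_le_rpow_of_exponent_ge hδ hδ1.le he
  have hY0 : 0 < Y := by linarith
  have hYpow : ∀ e : ℝ, Y ^ e = δ ^ (-(β * e)) := fun e => by
    rw [hY, ← Real.rpow_mul hδ.le]; congr 1; ring
  have hdiag : 4 * (δ ^ (1 / θ)) ^ (-s) ≤ N := by
    have hστ : σ ≤ σ / θ := by
      rw [le_div_iff₀ hθ0]; exact mul_le_of_le_one_right hσ0.le hθ1.le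
    have hDb : D * β - s / θ = σ / θ := by rw [hσ]; field_simp
    have he : σ / 4 ≤ β * (D - n * τ) - s / θ := by
      have : β * (D - n * τ) - s / θ = σ / θ - β * (n * τ) := by rw [← hDb]; ring
      linarith
    have hpos : 0 ≤ D - n * τ := by
      have h1 : 0 ≤ s / θ := by positivity
      have h2 : 0 < β * (D - n * τ) := by linarith
      exact (pos_of_mul_pos_right h2 hβ0.le).le
    have h1 : (δ ^ (1 / θ)) ^ (-s) = Y ^ (D - n * τ) * δ ^ (β * (D - n * τ) - s / θ) := by
      rw [hYpow, ← Real.rpow_mul hδ.le, ← Real.rpow_add hδ]; congr 1; ring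
    have h2 : Y ^ (D - n * τ) ≤ C * N := (Real.rpow_le_rpow hY0.le hQY hpos).trans hN
    have h3 := hexp _ he
    have h4 : 4 * C * δ ^ (σ / 4) ≤ 1 := by
      refine le_trans ?_ hsm
      apply mul_le_mul_of_nonneg_right _ (Real.rpow_nonneg hδ.le _)
      have : C ≤ C ^ 3 := le_self_pow₀ hC (by norm_num)
      calc 4 * C = 4 * C * 1 := (mul_one _).symm
        _ ≤ 4 * C ^ 3 * 2 ^ E :=
          mul_le_mul (by linarith only [this]) h2E zero_le_one (by positivity)
    calc 4 * (δ ^ (1 / θ)) ^ (-s) ≤ 4 * ((C * N) * δ ^ (σ / 4)) := by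
          rw [h1]
          exact mul_le_mul_of_nonneg_left
            (mul_le_mul h2 h3 (Real.rpow_nonneg hδ.le _) (by positivity)) (by norm_num)
      _ = (4 * C * δ ^ (σ / 4)) * N := by ring
      _ ≤ 1 * N := mul_le_mul_of_nonneg_right h4 hN0.le
      _ = N := one_mul _
  have hoff : 4 * (δ ^ (D - s) * T) ≤ N ^ 2 := by
    have he : σ / 4 ≤ D - s - β * E := by
      have : D - s - β * E = σ - D * β * τ - 2 * (β * (n * τ)) := by
        rw [hσ, ← hbal, hE]; ring
      rw [this, hτσ]; linarith
    have h1 : (Q : ℝ) ^ (t + 2 * (n + 1) + (n + 1) * τ)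
        = ((Q : ℝ) ^ ((n : ℝ) + 1 - n * τ)) ^ 2 * (Q : ℝ) ^ E := by
      rw [← Real.rpow_mul_natCast hQ0.le, ← Real.rpow_add hQ0]
      congr 1; rw [hE, hD]; push_cast; ring
    have h2 : (Q : ℝ) ^ E ≤ 2 ^ E * Y ^ E := by
      rw [← Real.mul_rpow (by norm_num) hY0.le]
      exact Real.rpow_le_rpow hQ0.le hQ2Y hE0.le
    have h3 : ((Q : ℝ) ^ ((n : ℝ) + 1 - n * τ)) ^ 2 ≤ (C * N) ^ 2 :=
      pow_le_pow_left₀ (Real.rpow_nonneg hQ0.le _) hN 2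
    have h4 : T ≤ C * ((C * N) ^ 2 * (2 ^ E * Y ^ E)) := by
      refine hT.trans ?_
      rw [h1]; gcongr
    have h5 : δ ^ (D - s) * Y ^ E = δ ^ (D - s - β * E) := by
      rw [hYpow, ← Real.rpow_add hδ]; congr 1
    calc 4 * (δ ^ (D - s) * T) ≤ 4 * (δ ^ (D - s) * (C * ((C * N) ^ 2 * (2 ^ E * Y ^ E)))) := by
          gcongr
      _ = 4 * C ^ 3 * 2 ^ E * (δ ^ (D - s) * Y ^ E) * N ^ 2 := by ring
      _ ≤ 4 * C ^ 3 * 2 ^ E * δ ^ (σ / 4) * N ^ 2 := by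
          rw [h5]; have := hexp _ he; gcongr
      _ ≤ 1 * N ^ 2 := mul_le_mul_of_nonneg_right hsm (sq_nonneg _)
      _ = N ^ 2 := one_mul _
  have h1 := mul_le_mul_of_nonneg_left hdiag hN0.le
  have h2 := pow_pos hN0 2
  linarith only [key, h1, h2, hoff, sq N]

/-! ### A crude cover -/

lemma Gset_coord_mem {t : ℝ} (ht : 0 < t) {n : ℕ} (hn : 1 ≤ n)
    {z : EuclideanSpace ℝ (Fin (n + 1))} (hz : z ∈ Gset t (n + 1)) (j : Fin (n + 1)) :
    z j ∈ Set.Icc (0 : ℝ) 1 := by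
  obtain ⟨x, hx, hzx, hl⟩ := hz
  rcases Nat.lt_succ_iff_lt_or_eq.mp j.2 with hj | hj
  · have := hzx ⟨j, hj⟩
    have h2 : Fin.castLE (Nat.sub_le (n + 1) 1) ⟨j, hj⟩ = j := Fin.ext rfl
    rw [h2] at this
    rw [this]; exact hx _
  · rw [hl j hj]
    unfold popcornFun
    split_ifs with h
    · obtain ⟨p, hp, -⟩ := h.choose_spec
      have h1 := hp (⟨0, hn⟩ : Fin n)
      have h2 : 1 ≤ h.choose := by omega
      exact ⟨by positivity, Real.rpow_le_one_of_one_le_of_nonpos (by exact_mod_cast h2) (by linarith)⟩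
    · simp

/-- The exponent `n + 2` is admissible for `lowerIntDim`: the unit cube is covered by about
`M^{n+1}` balls of diameter comparable to `1/M`. -/
lemma exists_crude_cover {t θ : ℝ} (ht : 0 < t) (hθ0 : 0 < θ) (hθ1 : θ < 1) {n : ℕ} (hn : 1 ≤ n)
    {ε δ₀ : ℝ} (hε : 0 < ε) (hδ₀ : 0 < δ₀) (hδ₀1 : δ₀ ≤ 1) :
    ∃ δ : ℝ, 0 < δ ∧ δ < δ₀ ∧
      ∃ (m : ℕ) (U : Fin m → Set (EuclideanSpace ℝ (Fin (n + 1)))),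
        Gset t (n + 1) ⊆ (⋃ i, U i) ∧
        (∀ i, δ ^ (1 / θ) ≤ Metric.diam (U i) ∧ Metric.diam (U i) ≤ δ) ∧
        (∑ i, Metric.diam (U i) ^ ((n : ℝ) + 2)) ≤ ε := by
  set D : ℝ := (n : ℝ) + 1 with hD
  have hD0 : 0 < D := by positivity
  obtain ⟨M, hM⟩ := exists_nat_gt (max (2 * D / δ₀) (2 ^ (n + 1) * (2 * D) ^ (n + 2) / ε))
  have hM1 : 2 * D / δ₀ < M := (le_max_left _ _).trans_lt hM
  have hM2 : 2 ^ (n + 1) * (2 * D) ^ (n + 2) / ε < M := (le_max_right _ _).trans_lt hM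
  have hM0 : (0 : ℝ) < M := lt_trans (by positivity) hM1
  have hMn : 0 < M := by exact_mod_cast hM0
  set δ : ℝ := 2 * (D / M) with hδ
  have hδ0 : 0 < δ := by positivity
  have hδlt : δ < δ₀ := by
    rw [div_lt_iff₀ hδ₀] at hM1
    have : δ = 2 * D / M := by rw [hδ]; ring
    rw [this, div_lt_iff₀ hM0]; linarith
  let c : (Fin (n + 1) → Fin (M + 1)) → EuclideanSpace ℝ (Fin (n + 1)) :=
    fun k => WithLp.toLp 2 fun j => ((k j : ℕ) : ℝ) / M
  let e := Fintype.equivFin (Fin (n + 1) → Fin (M + 1))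
  have hdiam : ∀ x : EuclideanSpace ℝ (Fin (n + 1)),
      Metric.diam (Metric.closedBall x (D / M)) = δ := fun x => by
    rw [Metric.diam_closedBall_eq x (by positivity)]
  refine ⟨δ, hδ0, hδlt, _, fun i => Metric.closedBall (c (e.symm i)) (D / M), ?_, ?_, ?_⟩
  · intro z hz
    have hzj := fun j => Gset_coord_mem ht hn hz j
    have hlt : ∀ j, ⌊z j * M⌋₊ < M + 1 := fun j => by
      rw [Nat.lt_succ_iff]
      apply Nat.floor_le_of_le
      exact mul_le_of_le_one_left hM0.le (hzj j).2
    let k : Fin (n + 1) → Fin (M + 1) := fun j => ⟨⌊z j * M⌋₊, hlt j⟩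
    refine Set.mem_iUnion.mpr ⟨e k, ?_⟩
    rw [Equiv.symm_apply_apply, Metric.mem_closedBall, EuclideanSpace.dist_eq]
    apply Real.sqrt_le_iff.mpr
    refine ⟨by positivity, ?_⟩
    have hcd : ∀ j, dist (z j) (c k j) ^ 2 ≤ (1 / (M : ℝ)) ^ 2 := fun j => by
      apply pow_le_pow_left₀ dist_nonneg
      have h0 : 0 ≤ z j * M := mul_nonneg (hzj j).1 hM0.le
      have h1 := Nat.floor_le h0
      have h2 := Nat.lt_floor_add_one (z j * M)
      have h3 : c k j = (⌊z j * M⌋₊ : ℝ) / M := rfl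
      rw [h3, Real.dist_eq]
      have h4 : z j - (⌊z j * M⌋₊ : ℝ) / M = (z j * M - ⌊z j * M⌋₊) / M := by field_simp
      rw [h4, abs_div, abs_of_pos hM0, abs_of_nonneg (by linarith)]
      gcongr; linarith
    calc ∑ j, dist (z j) (c k j) ^ 2 ≤ ∑ _j : Fin (n + 1), (1 / (M : ℝ)) ^ 2 :=
          Finset.sum_le_sum fun j _ => hcd j
      _ = D * (1 / M) ^ 2 := by simp [hD]
      _ ≤ D ^ 2 * (1 / M) ^ 2 := by
          apply mul_le_mul_of_nonneg_right _ (sq_nonneg _)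
          have : (1 : ℝ) ≤ D := by rw [hD]; linarith [(Nat.cast_nonneg n : (0 : ℝ) ≤ n)]
          nlinarith
      _ = (D / M) ^ 2 := by ring
  · intro i
    rw [hdiam]
    refine ⟨?_, le_rfl⟩
    calc δ ^ (1 / θ) ≤ δ ^ (1 : ℝ) :=
          Real.rpow_le_rpow_of_exponent_ge hδ0 (hδlt.le.trans hδ₀1) (by
            rw [le_div_iff₀ hθ0]; linarith)
      _ = δ := Real.rpow_one δ
  · simp only [hdiam]
    rw [Finset.sum_const, Finset.card_univ, Fintype.card_fin, nsmul_eq_mul, Fintype.card_fun,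
      Fintype.card_fin, Fintype.card_fin]
    have h1 : δ ^ ((n : ℝ) + 2) = δ ^ (n + 2) := by
      rw [← Real.rpow_natCast]; push_cast; rfl
    rw [h1]; push_cast
    have hM1' : (1 : ℝ) ≤ M := by exact_mod_cast hMn
    calc ((M : ℝ) + 1) ^ (n + 1) * δ ^ (n + 2) ≤ (2 * M : ℝ) ^ (n + 1) * δ ^ (n + 2) := by
          gcongr; linarith
      _ = 2 ^ (n + 1) * (2 * D) ^ (n + 2) / M := by
          have : δ = 2 * D / M := by rw [hδ]; ring
          rw [this, div_pow, mul_pow, pow_succ (M : ℝ) (n + 1)]; field_simp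
      _ ≤ ε := by
          rw [div_lt_iff₀ hε] at hM2
          rw [div_le_iff₀ hM0]; linarith

/-- lower bound for the lower θ-intermediate dimension of `G_{t,d}`. -/
theorem lower_intermediate_dimension_bound (d : ℕ) (hd : 2 ≤ d) (t : ℝ) (ht : 0 < t)
    (ht' : t < (d:ℝ)/((d:ℝ)-1)) (θ : ℝ) (hθ : ((d:ℝ)-1)*t/(d:ℝ) ≤ θ) (hθ1 : θ < 1) :
    (d:ℝ)^2*θ/((d:ℝ)*θ+t) ≤ lowerIntDim d θ (Gset t d) := by
  obtain ⟨n, rfl⟩ : ∃ n, d = n + 1 := ⟨d - 1, by omega⟩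
  have hn : 1 ≤ n := by omega
  have hnR : (1 : ℝ) ≤ n := by exact_mod_cast hn
  have hθ0 : 0 < θ := by
    refine lt_of_lt_of_le ?_ hθ
    push_cast
    have : (0 : ℝ) < (n : ℝ) + 1 - 1 := by linarith
    positivity
  rw [lowerIntDim, if_neg hθ0.ne']
  apply le_csInf
  -- without this the infimum could be the junk value `sInf ∅ = 0`
  · refine ⟨(n : ℝ) + 2, by positivity, fun ε hε δ₀ hδ₀ hδ₀1 => ?_⟩
    exact exists_crude_cover ht hθ0 hθ1 hn hε hδ₀ hδ₀1
  · rintro s ⟨hs0, hs⟩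
    by_contra! hlt
    push_cast at hlt
    obtain ⟨δ₀, h0, h1, hno⟩ := no_cheap_cover hn ht hθ0 hθ1 hs0 hlt
    obtain ⟨δ, hδ, hδlt, M, U, hcov, hU, hsum⟩ := hs 1 one_pos δ₀ h0 h1
    exact hno δ hδ hδlt M U hcov hU hsum
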